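/- Let N, K be positive integers with K ≥ N, and let v, w : ℤ → ℂ be finitely supported. The biorthogonality conditions ∑_{n∈ℤ} w[jK−n]·exp(2πi k(jK−n)/N)·v[n−iK]·exp(2πi l(n−iK)/N) = δ[k−l]·δ[i−j] for all k, l ∈ {0,…,N−1} and i, j ∈ ℤ hold if and only if the crossambiguity function satisfies A_{v,w}(0,0) = 1 and A_{v,w}(pK, q) = 0 for all integers p and q ∈ {0,…,N−1} with (p,q) ≠ (0,0). -/

import Mathlib

/-!
After the substitution `n ↦ n + jK`, the biorthogonality sum depends on the indices only through
`i - j` and `l - k`, up to a unimodular phase: it equals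
`exp(-2πi l(i-j)K/N) · A_{v,w}((i-j)K, l-k)` (`biorth_sum_eq`). Since `A_{v,w}(x, ·)` is
`N`-periodic (`crossamb_add_period`), the differences `l - k ∈ {-(N-1), …, N-1}` reduce to
`q ∈ {0, …, N-1}`, and the phase is nonzero, and equal to `1` when `i = j`.
-/

open Complex

/-- The crossambiguity function
`A_{v,w}(x,y) = ∑_{n∈ℤ} v[n−x]·w[−n]·exp(2πi y n/N)`. -/
noncomputable def crossamb (N : ℕ) (v w : ℤ → ℂ) (x y : ℤ) : ℂ :=
  ∑' n : ℤ, v (n - x) * w (-n) * Complex.exp (2 * Real.pi * Complex.I * (y : ℂ) * (n : ℂ) / N)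

lemma crossamb_add_period (N : ℕ) (hN : 0 < N) (v w : ℤ → ℂ) (x y : ℤ) :
    crossamb N v w x (y + N) = crossamb N v w x y := by
  have hN' : (N : ℂ) ≠ 0 := by exact_mod_cast hN.ne'
  unfold crossamb
  refine tsum_congr fun n => ?_
  congr 1
  rw [Complex.exp_eq_exp_iff_exists_int]
  refine ⟨n, ?_⟩
  push_cast
  field_simp

/-- The biorthogonality sum is a phase times a value of the crossambiguity function. -/
lemma biorth_sum_eq (N K : ℕ) (v w : ℤ → ℂ) (k l : ℕ) (i j : ℤ) :
    ∑' n : ℤ,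
      w (j * K - n) *
          Complex.exp (2 * Real.pi * Complex.I * (k : ℂ) * ((j * (K : ℤ) - n : ℤ) : ℂ) / N) *
        (v (n - i * K) *
          Complex.exp (2 * Real.pi * Complex.I * (l : ℂ) * ((n - i * (K : ℤ) : ℤ) : ℂ) / N))
      = Complex.exp (-(2 * Real.pi * Complex.I * (l : ℂ) * (((i - j) * K : ℤ) : ℂ) / N)) *
        crossamb N v w ((i - j) * K) ((l : ℤ) - k) := by
  rw [← (Equiv.addRight (j * (K : ℤ))).tsum_eq]
  unfold crossamb
  rw [← tsum_mul_left]
  refine tsum_congr fun n => ?_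
  simp only [Equiv.coe_addRight]
  have h1 : j * (K : ℤ) - (n + j * K) = -n := by ring
  have h2 : n + j * (K : ℤ) - i * K = n - (i - j) * K := by ring
  rw [h1, h2]
  have h3 : ∀ a b c d s t : ℂ, Complex.exp a * Complex.exp b = Complex.exp c * Complex.exp d →
      s * Complex.exp a * (t * Complex.exp b) = Complex.exp c * (t * s * Complex.exp d) := by
    intro a b c d s t h
    linear_combination s * t * h
  apply h3
  rw [← Complex.exp_add, ← Complex.exp_add]
  congr 1
  push_cast
  ring

/-- For finitely supported `v, w : ℤ → ℂ`, the biorthogonality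
conditions
`∑_{n∈ℤ} w[jK−n]·exp(2πi k(jK−n)/N)·v[n−iK]·exp(2πi l(n−iK)/N) = δ[k−l]·δ[i−j]`
for all `k, l ∈ {0,…,N−1}` and `i, j ∈ ℤ` hold if and only if the
crossambiguity function satisfies `A_{v,w}(0,0) = 1` and `A_{v,w}(pK, q) = 0`
for all integers `p` and `q ∈ {0,…,N−1}` with `(p,q) ≠ (0,0)`. -/
theorem stmt14
    (N K : ℕ) (hN : 0 < N) (hNK : N ≤ K)
    (v w : ℤ → ℂ) (hv : (Function.support v).Finite) (hw : (Function.support w).Finite) :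
    (∀ (k l : Fin N) (i j : ℤ),
        ∑' n : ℤ,
          w (j * K - n) *
              Complex.exp (2 * Real.pi * Complex.I * ((k : ℕ) : ℂ) * ((j * (K : ℤ) - n : ℤ) : ℂ) / N) *
            (v (n - i * K) *
              Complex.exp (2 * Real.pi * Complex.I * ((l : ℕ) : ℂ) * ((n - i * (K : ℤ) : ℤ) : ℂ) / N))
          = if k = l ∧ i = j then 1 else 0)
    ↔
    (crossamb N v w 0 0 = 1 ∧
      ∀ p q : ℤ, 0 ≤ q → q ≤ (N : ℤ) - 1 → (p, q) ≠ (0, 0) →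
        crossamb N v w (p * K) q = 0) := by
  simp only [biorth_sum_eq]
  constructor
  · intro h
    refine ⟨by simpa using h ⟨0, hN⟩ ⟨0, hN⟩ 0 0, fun p q hq0 hq1 hpq => ?_⟩
    lift q to ℕ using hq0
    have hqN : q < N := by omega
    have hne : ¬((⟨0, hN⟩ : Fin N) = ⟨q, hqN⟩ ∧ p = 0) := by
      rintro ⟨h1, h2⟩
      rw [Fin.mk.injEq] at h1
      exact hpq (by simp [← h1, h2])
    have h0 := h ⟨0, hN⟩ ⟨q, hqN⟩ p 0
    rw [if_neg hne] at h0
    simpa [Complex.exp_ne_zero] using h0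
  · rintro ⟨h1, h0⟩ k l i j
    split_ifs with hc
    · obtain ⟨rfl, rfl⟩ := hc
      simpa using h1
    · refine mul_eq_zero_of_right _ ?_
      have hk := k.isLt
      have hl := l.isLt
      rcases le_or_gt (k : ℕ) (l : ℕ) with hkl | hkl
      · refine h0 _ _ (by omega) (by omega) fun he => hc ?_
        rw [Prod.mk.injEq] at he
        exact ⟨Fin.ext (by omega), by omega⟩
      · rw [← crossamb_add_period N hN]
        refine h0 _ _ (by omega) (by omega) fun he => ?_
        rw [Prod.mk.injEq] at he
        omega
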